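/- Let S : A → A be the K-linear endomorphism determined on the basis ω₁, ω₂, ω₃, ω₄, η₁, η₂, η₃, η₄ by S(ωᵢ) = ωᵢ for i = 1,2,3,4 and S(η₁) = (1/2)(ζ⁻¹η₁ + η₂ − ζ⁻¹η₃ + η₄), S(η₂) = (1/2)(η₁ + ζ⁻¹η₂ + η₃ − ζ⁻¹η₄), S(η₃) = (1/2)(−ζ⁻¹η₁ + η₂ + ζ⁻¹η₃ + η₄), S(η₄) = (1/2)(η₁ − ζ⁻¹η₂ + η₃ + ζ⁻¹η₄). Then S is an antipode for (A, Δ, ε): writing Δ(a) = ∑ a₁ ⊗ a₂, one has ∑ S(a₁)a₂ = ε(a)1 = ∑ a₁S(a₂) for all a ∈ A. -/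

import Mathlib

open TensorProduct

/-- The defining relations of the second example: `x⁴ = 1`, `xy = yx³`, and
`y² = (1/2)(ζ + x - ζx² + x³)`. -/
inductive SecondRel (K : Type*) [Field K] (ζ : K) :
    FreeAlgebra K (Fin 2) → FreeAlgebra K (Fin 2) → Prop
  | x_pow_four : SecondRel K ζ (FreeAlgebra.ι K 0 ^ 4) 1
  | x_mul_y : SecondRel K ζ (FreeAlgebra.ι K 0 * FreeAlgebra.ι K 1)
      (FreeAlgebra.ι K 1 * FreeAlgebra.ι K 0 ^ 3)
  | y_sq : SecondRel K ζ (FreeAlgebra.ι K 1 ^ 2)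
      ((2 : K)⁻¹ • (ζ • (1 : FreeAlgebra K (Fin 2)) + FreeAlgebra.ι K 0
        - ζ • (FreeAlgebra.ι K 0 ^ 2) + FreeAlgebra.ι K 0 ^ 3))

/-- The second example: the `K`-algebra generated by noncommuting elements `x`, `y`
subject to `x⁴ = 1`, `xy = yx³` and `y² = (1/2)(ζ + x - ζx² + x³)`. -/
abbrev SecondAlg (K : Type*) [Field K] (ζ : K) : Type _ := RingQuot (SecondRel K ζ)

/-- The generator `x` of the second example. -/
noncomputable def xS (K : Type*) [Field K] (ζ : K) : SecondAlg K ζ :=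
  RingQuot.mkAlgHom K (SecondRel K ζ) (FreeAlgebra.ι K 0)

/-- The generator `y` of the second example. -/
noncomputable def yS (K : Type*) [Field K] (ζ : K) : SecondAlg K ζ :=
  RingQuot.mkAlgHom K (SecondRel K ζ) (FreeAlgebra.ι K 1)

/-- The group `G = ℤ/2 × ℤ/2`, written multiplicatively. -/
abbrev GG : Type := Multiplicative (ZMod 2 × ZMod 2)

/-- `g₁ = (0,0)`. -/
def g1 : GG := Multiplicative.ofAdd (0, 0)
/-- `g₂ = (1,0)`. -/
def g2 : GG := Multiplicative.ofAdd (1, 0)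
/-- `g₃ = (0,1)`. -/
def g3 : GG := Multiplicative.ofAdd (0, 1)
/-- `g₄ = (1,1)`. -/
def g4 : GG := Multiplicative.ofAdd (1, 1)

/-- The twisted multiplication of `A ⊗̂ A`:
`(a ⊗ b)(a' ⊗ b') = (1/4) ∑_{g,g'} θ(g,g') (a (g.a')) ⊗ ((g'.b) b')`,
extended bilinearly. -/
noncomputable def twMul {K : Type*} [Field K] {B : Type*} [Ring B] [Algebra K B]
    {G : Type*} [Monoid G] [Fintype G]
    (ρ : G →* (B →ₐ[K] B)) (θ : G → G → K)
    (z w : B ⊗[K] B) : B ⊗[K] B :=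
  (4 : K)⁻¹ • ∑ g : G, ∑ g' : G, θ g g' •
    (TensorProduct.map (LinearMap.mul' K B) (LinearMap.mul' K B))
      ((TensorProduct.tensorTensorTensorComm K B B B B)
        ((TensorProduct.map
            (TensorProduct.map LinearMap.id (ρ g').toLinearMap)
            (TensorProduct.map (ρ g).toLinearMap LinearMap.id))
          (z ⊗ₜ[K] w)))

/-- `ω₁ := 1`. -/
noncomputable def w1S (K : Type*) [Field K] (ζ : K) : SecondAlg K ζ := 1

/-- `ω₂ := (1/2)(1 + ιζ²)x + (1/2)(1 - ιζ²)x³`. -/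
noncomputable def w2S (K : Type*) [Field K] (i ζ : K) : SecondAlg K ζ :=
  ((2 : K)⁻¹ * (1 + i * ζ ^ 2)) • xS K ζ +
    ((2 : K)⁻¹ * (1 - i * ζ ^ 2)) • (xS K ζ ^ 3)

/-- `ω₃ := (1/2)(1 - ιζ²)x + (1/2)(1 + ιζ²)x³`. -/
noncomputable def w3S (K : Type*) [Field K] (i ζ : K) : SecondAlg K ζ :=
  ((2 : K)⁻¹ * (1 - i * ζ ^ 2)) • xS K ζ +
    ((2 : K)⁻¹ * (1 + i * ζ ^ 2)) • (xS K ζ ^ 3)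

/-- `ω₄ := x²`. -/
noncomputable def w4S (K : Type*) [Field K] (ζ : K) : SecondAlg K ζ := xS K ζ ^ 2

/-- `η₁ := y`. -/
noncomputable def e1S (K : Type*) [Field K] (ζ : K) : SecondAlg K ζ := yS K ζ

/-- `η₂ := x³y`. -/
noncomputable def e2S (K : Type*) [Field K] (ζ : K) : SecondAlg K ζ := xS K ζ ^ 3 * yS K ζ

/-- `η₃ := x²y`. -/
noncomputable def e3S (K : Type*) [Field K] (ζ : K) : SecondAlg K ζ := xS K ζ ^ 2 * yS K ζ

/-- `η₄ := xy`. -/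
noncomputable def e4S (K : Type*) [Field K] (ζ : K) : SecondAlg K ζ := xS K ζ * yS K ζ

/-!
The elements `ωᵢ`, `ηᵢ` are group-like and span `A`, so it suffices that `S` inverts each of them.
Put `e = (1 + x²) / 2`, an idempotent commuting with `x` and `y`. The twisted multiplication turns
the formula for `Δ(x)` into `Δ(xⁿ) = xⁿe ⊗ xⁿ + xⁿ(1 - e) ⊗ φ(xⁿ)`, and multiplying by
`Δ(y) = y ⊗ y` untwists this to `Δ(xⁿy) = xⁿy ⊗ xⁿy`. The `ωᵢ` are involutions. The elements `xⁿy`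
all have the same square `xe + ζ(1 - e)`, which is central with inverse `xe + ζ⁻¹(1 - e)`.
-/

section AntipodeOnGroupLikes

variable {R B : Type*} [CommSemiring R] [Semiring B] [Algebra R B]

/-- `a` is group-like for the comultiplication `Δ` and the counit `ε`, and `S a` is its two-sided
inverse. No compatibility between `Δ` and the product of `B` is assumed, so that twisted
bialgebras are covered. -/
structure InvertsGroupLike (Δ : B →ₗ[R] B ⊗[R] B) (ε : B →ₗ[R] R) (S : B →ₗ[R] B) (a : B) :
    Prop where
  comul_eq : Δ a = a ⊗ₜ a
  counit_eq : ε a = 1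
  antipode_mul_self : S a * a = 1
  self_mul_antipode : a * S a = 1

lemma invertsGroupLike_of_mul_self_eq_one {Δ : B →ₗ[R] B ⊗[R] B} {ε : B →ₗ[R] R} {S : B →ₗ[R] B}
    {a : B} (hΔ : Δ a = a ⊗ₜ a) (hε : ε a = 1) (hS : S a = a) (ha : a * a = 1) :
    InvertsGroupLike Δ ε S a :=
  ⟨hΔ, hε, by rw [hS, ha], by rw [hS, ha]⟩

lemma antipode_of_span_groupLike {Δ : B →ₗ[R] B ⊗[R] B} {ε : B →ₗ[R] R} {S : B →ₗ[R] B}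
    {s : Set B} (hspan : Submodule.span R s = ⊤) (hs : ∀ a ∈ s, InvertsGroupLike Δ ε S a) (a : B) :
    LinearMap.mul' R B (TensorProduct.map S LinearMap.id (Δ a)) = ε a • (1 : B) ∧
      LinearMap.mul' R B (TensorProduct.map LinearMap.id S (Δ a)) = ε a • (1 : B) := by
  have left : LinearMap.mul' R B ∘ₗ TensorProduct.map S LinearMap.id ∘ₗ Δ = ε.smulRight 1 :=
    LinearMap.ext_on hspan fun b hb ↦ by
      simp [(hs b hb).comul_eq, (hs b hb).counit_eq, (hs b hb).antipode_mul_self]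
  have right : LinearMap.mul' R B ∘ₗ TensorProduct.map LinearMap.id S ∘ₗ Δ = ε.smulRight 1 :=
    LinearMap.ext_on hspan fun b hb ↦ by
      simp [(hs b hb).comul_eq, (hs b hb).counit_eq, (hs b hb).self_mul_antipode]
  exact ⟨LinearMap.congr_fun left a, LinearMap.congr_fun right a⟩

lemma submodule_eq_top_of_adjoin_eq_top {s : Set B} (hs : Algebra.adjoin R s = ⊤)
    {P : Submodule R B} (one_mem : 1 ∈ P) (mul_mem : ∀ a ∈ s, ∀ b ∈ P, a * b ∈ P) : P = ⊤ := by
  refine Submodule.eq_top_iff'.mpr fun a ↦ ?_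
  have mul_mem_of_mem_adjoin (b : B) (hb : b ∈ P) : a * b ∈ P := by
    have ha : a ∈ Algebra.adjoin R s := hs ▸ Algebra.mem_top
    induction ha using Algebra.adjoin_induction generalizing b with
    | mem a ha => exact mul_mem a ha b hb
    | algebraMap r => simpa only [← Algebra.smul_def] using P.smul_mem r hb
    | add a a' _ _ iha iha' => simpa only [add_mul] using P.add_mem (iha b hb) (iha' b hb)
    | mul a a' _ _ iha iha' => simpa only [mul_assoc] using iha _ (iha' b hb)
  simpa only [mul_one] using mul_mem_of_mem_adjoin 1 one_mem

end AntipodeOnGroupLikes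

section TwistedMultiplication

variable {K B : Type*} [Field K] [Ring B] [Algebra K B]

section Monoid

variable {G : Type*} [Monoid G] [Fintype G] (ρ : G →* (B →ₐ[K] B)) (θ : G → G → K)

lemma twMul_add_left (z z' w : B ⊗[K] B) :
    twMul ρ θ (z + z') w = twMul ρ θ z w + twMul ρ θ z' w := by
  simp only [twMul, add_tmul, map_add, smul_add, Finset.sum_add_distrib]

lemma twMul_add_right (z w w' : B ⊗[K] B) :
    twMul ρ θ z (w + w') = twMul ρ θ z w + twMul ρ θ z w' := by
  simp only [twMul, tmul_add, map_add, smul_add, Finset.sum_add_distrib]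

lemma twMul_tmul_tmul (a b c d : B) :
    twMul ρ θ (a ⊗ₜ b) (c ⊗ₜ d) =
      (4 : K)⁻¹ • ∑ g, ∑ g', θ g g' • ((a * ρ g c) ⊗ₜ[K] (ρ g' b * d)) := by
  simp [twMul]

end Monoid

lemma sum_GG {M : Type*} [AddCommMonoid M] (f : GG → M) :
    ∑ g, f g = f g1 + f g2 + f g3 + f g4 := by
  have univ_eq : (Finset.univ : Finset GG) = {g1, g2, g3, g4} := by decide
  rw [univ_eq, Finset.sum_insert (by decide), Finset.sum_insert (by decide),
    Finset.sum_insert (by decide), Finset.sum_singleton]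
  abel

lemma map_one_eq_one_of_map_mul {M M₀ : Type*} [MulOneClass M] [MulZeroOneClass M₀]
    [IsRightCancelMulZero M₀] {f : M → M₀}
    (hf : ∀ g h, f (g * h) = f g * f h) {g : M} (hg : f g ≠ 0) : f 1 = 1 :=
  (mul_eq_right₀ hg).mp (by rw [← hf, one_mul])

/-- `θ` is a bicharacter of `ℤ/2 × ℤ/2` for which `g₂` and `g₃` anticommute and `g₃` is
isotropic, as for the one that twists `A ⊗ A`. -/
structure IsSignBicharacter (θ : GG → GG → K) : Prop where
  map_mul_right (g h h' : GG) : θ g (h * h') = θ g h * θ g h'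
  map_mul_left (g g' h : GG) : θ (g * g') h = θ g h * θ g' h
  g2_g3 : θ g2 g3 = -1
  g3_g2 : θ g3 g2 = -1
  g3_g3 : θ g3 g3 = 1

namespace IsSignBicharacter

variable {θ : GG → GG → K} (hθ : IsSignBicharacter θ)
include hθ

lemma one_g2 : θ 1 g2 = 1 :=
  map_one_eq_one_of_map_mul (f := (θ · g2)) (hθ.map_mul_left · · g2) (g := g3)
    (by simp [hθ.g3_g2])

lemma one_g3 : θ 1 g3 = 1 :=
  map_one_eq_one_of_map_mul (f := (θ · g3)) (hθ.map_mul_left · · g3) (g := g3)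
    (by simp [hθ.g3_g3])

lemma g2_one : θ g2 1 = 1 :=
  map_one_eq_one_of_map_mul (hθ.map_mul_right g2) (g := g3) (by simp [hθ.g2_g3])

lemma g3_one : θ g3 1 = 1 :=
  map_one_eq_one_of_map_mul (hθ.map_mul_right g3) (g := g3) (by simp [hθ.g3_g3])

lemma one_one : θ 1 1 = 1 :=
  map_one_eq_one_of_map_mul (hθ.map_mul_right 1) (g := g3) (by simp [hθ.one_g3])

variable [NeZero (2 : K)] {ρ : GG →* (B →ₐ[K] B)}

-- Summing over `g'` kills all `g` with `θ(g, g₃) ≠ 1`, which leaves `g ∈ {1, g₃}`.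
lemma twMul_tmul_tmul_of_fixed {b : B} (hb : ρ g3 b = b) (a c d : B) :
    twMul ρ θ (a ⊗ₜ b) (c ⊗ₜ d) =
      (2 : K)⁻¹ • ((a * (c + ρ g3 c)) ⊗ₜ[K] (b * d) +
        (a * (c - ρ g3 c)) ⊗ₜ[K] (ρ g2 b * d)) := by
  have two_ne : (2 : K) ≠ 0 := two_ne_zero
  have four_eq : (4 : K) = 2 * 2 := by norm_num
  have g1_eq : g1 = 1 := rfl
  have g4_eq : g4 = g2 * g3 := rfl
  simp only [twMul_tmul_tmul, sum_GG, g1_eq, g4_eq, hθ.map_mul_left, hθ.map_mul_right, hθ.one_one,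
    hθ.one_g2, hθ.one_g3, hθ.g2_one, hθ.g3_one, hθ.g2_g3, hθ.g3_g2, hθ.g3_g3, map_one, map_mul,
    AlgHom.one_apply, AlgHom.mul_apply, hb, mul_add, mul_sub, add_tmul, sub_tmul, four_eq]
  match_scalars <;> field_simp <;> ring

lemma twMul_tmul_tmul_of_fixed_of_fixed {b c : B} (hb : ρ g3 b = b) (hc : ρ g3 c = c) (a d : B) :
    twMul ρ θ (a ⊗ₜ b) (c ⊗ₜ d) = (a * c) ⊗ₜ[K] (b * d) := by
  rw [hθ.twMul_tmul_tmul_of_fixed hb, hc, sub_self, mul_zero, zero_tmul, add_zero, ← two_smul K c,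
    mul_smul_comm, ← smul_tmul', inv_smul_smul₀ two_ne_zero]

end IsSignBicharacter

/-- The shape `Δ(p) = pe ⊗ p + p(1 - e) ⊗ φ(p)` shared by the powers of `x`, for `e` the idempotent
`(1 + x²) / 2`, together with the invariance that lets such elements be multiplied. -/
structure IsTwistedGroupLike (ρ : GG →* (B →ₐ[K] B)) (Δ : B →ₗ[K] B ⊗[K] B) (e p : B) :
    Prop where
  fixed : ρ g3 p = p
  commute : Commute p e
  comul_eq : Δ p = (p * e) ⊗ₜ p + (p * (1 - e)) ⊗ₜ ρ g2 p

namespace IsTwistedGroupLike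

variable {ρ : GG →* (B →ₐ[K] B)} {θ : GG → GG → K} {Δ : B →ₗ[K] B ⊗[K] B} {e p q : B}

lemma one (hΔ1 : Δ 1 = 1 ⊗ₜ 1) : IsTwistedGroupLike ρ Δ e 1 where
  fixed := map_one _
  commute := .one_left e
  comul_eq := by
    rw [map_one (ρ g2), ← add_tmul, one_mul, one_mul, add_sub_cancel, hΔ1]

lemma map_g3_map_g2 (hp : IsTwistedGroupLike ρ Δ e p) : ρ g3 (ρ g2 p) = ρ g2 p := by
  rw [← AlgHom.mul_apply, ← map_mul, mul_comm, map_mul, AlgHom.mul_apply, hp.fixed]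

variable [NeZero (2 : K)] (hθ : IsSignBicharacter θ)
  (hΔm : ∀ a b : B, Δ (a * b) = twMul ρ θ (Δ a) (Δ b))
  (he : IsIdempotentElem e)
include hθ hΔm he

lemma mul (hρe : ρ g3 e = e) (hp : IsTwistedGroupLike ρ Δ e p) (hq : IsTwistedGroupLike ρ Δ e q) :
    IsTwistedGroupLike ρ Δ e (p * q) where
  fixed := by rw [map_mul, hp.fixed, hq.fixed]
  commute := hp.commute.mul_left hq.commute
  comul_eq := by
    have commute_compl : Commute q (1 - e) := (Commute.one_right q).sub_right hq.commute
    have mul_mul_eq {f f' : B} (hf : Commute q f) : p * f * (q * f') = p * q * (f * f') := by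
      simp only [mul_assoc, hf.symm.left_comm]
    have fixed_mul : ρ g3 (q * e) = q * e := by rw [map_mul, hq.fixed, hρe]
    have fixed_mul_compl : ρ g3 (q * (1 - e)) = q * (1 - e) := by
      rw [map_mul, map_sub, map_one, hq.fixed, hρe]
    simp only [hΔm, hp.comul_eq, hq.comul_eq, twMul_add_left, twMul_add_right,
      hθ.twMul_tmul_tmul_of_fixed_of_fixed, hp.fixed, hp.map_g3_map_g2, fixed_mul,
      fixed_mul_compl, mul_mul_eq hq.commute, mul_mul_eq commute_compl, he.eq,
      he.one_sub.eq, he.mul_one_sub_self, he.one_sub_mul_self, mul_zero, zero_tmul, add_zero,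
      zero_add, map_mul]

lemma pow (hρe : ρ g3 e = e) (hΔ1 : Δ 1 = 1 ⊗ₜ 1) (hp : IsTwistedGroupLike ρ Δ e p) (n : ℕ) :
    IsTwistedGroupLike ρ Δ e (p ^ n) := by
  induction n with
  | zero => simpa only [pow_zero] using one hΔ1
  | succ n ih => simpa only [pow_succ] using ih.mul hθ hΔm he hρe hp

lemma comul_mul {y : B} (hp : IsTwistedGroupLike ρ Δ e p) (hρy : ρ g3 y = e * y - (1 - e) * y)
    (hΔy : Δ y = y ⊗ₜ y) : Δ (p * y) = (p * y) ⊗ₜ (p * y) := by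
  have map_g2_map_g2 : ρ g2 (ρ g2 p) = p := by
    rw [← AlgHom.mul_apply, ← map_mul, show g2 * g2 = 1 by decide, map_one, AlgHom.one_apply]
  have add_eq : y + ρ g3 y = (2 : K) • (e * y) := by rw [hρy, two_smul]; noncomm_ring
  have sub_eq : y - ρ g3 y = (2 : K) • ((1 - e) * y) := by rw [hρy, two_smul]; noncomm_ring
  have mul_mul_eq (f f' : B) : p * f * (f' * y) = p * (f * f' * y) := by
    simp only [mul_assoc]
  simp only [hΔm, hp.comul_eq, hΔy, twMul_add_left, hθ.twMul_tmul_tmul_of_fixed hp.fixed,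
    hθ.twMul_tmul_tmul_of_fixed hp.map_g3_map_g2, map_g2_map_g2, add_eq, sub_eq, mul_smul_comm,
    ← smul_tmul', smul_add, inv_smul_smul₀ (two_ne_zero' K), mul_mul_eq, he.eq,
    he.one_sub.eq, he.mul_one_sub_self, he.one_sub_mul_self, zero_mul, mul_zero, zero_tmul,
    add_zero, zero_add]
  rw [← add_tmul, ← mul_add, ← add_mul, add_sub_cancel, one_mul]

end IsTwistedGroupLike

end TwistedMultiplication

section FourthRootOfOne

variable (K : Type*) {B : Type*} [Field K] [Ring B] [Algebra K B]

/-- For `x⁴ = 1`, the idempotent projecting onto the eigenspace `1` of `x²`; the complementary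
idempotent `1 - sqIdem K x` projects onto the eigenspace `-1`. -/
noncomputable def sqIdem (x : B) : B := (2 : K)⁻¹ • (1 + x ^ 2)

variable {K}

/-- The value of `y²` in terms of `x` and the parameter `a = ζ`. In this form, rather than that of
the defining relation, it is visibly inverted by replacing `a` with `a⁻¹`. -/
noncomputable def ySqValue (x : B) (a : K) : B := x * sqIdem K x + a • (1 - sqIdem K x)

lemma commute_sqIdem (x : B) : Commute x (sqIdem K x) :=
  ((Commute.one_right x).add_right (Commute.self_pow x 2)).smul_right _

lemma sq_mul_sqIdem {x : B} (hx : x ^ 4 = 1) : x ^ 2 * sqIdem K x = sqIdem K x := by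
  rw [sqIdem, mul_smul_comm, mul_add, mul_one, ← pow_add, hx, add_comm]

variable [NeZero (2 : K)] {x : B}

lemma one_sub_sqIdem : 1 - sqIdem K x = (2 : K)⁻¹ • (1 - x ^ 2) := by
  have two_ne : (2 : K) ≠ 0 := two_ne_zero
  simp only [sqIdem]
  match_scalars
  all_goals field_simp
  all_goals ring

lemma sqIdem_sub_one_sub_sqIdem : sqIdem K x - (1 - sqIdem K x) = x ^ 2 := by
  rw [one_sub_sqIdem, sqIdem, ← smul_sub, add_sub_sub_cancel, ← two_smul K,
    inv_smul_smul₀ two_ne_zero]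

lemma ySqValue_eq (a : K) :
    ySqValue x a = (2 : K)⁻¹ • (a • 1 + x - a • x ^ 2 + x ^ 3) := by
  rw [ySqValue, one_sub_sqIdem]
  simp only [sqIdem, mul_smul_comm, mul_add, mul_one, ← pow_succ']
  module

lemma isIdempotentElem_sqIdem (hx : x ^ 4 = 1) : IsIdempotentElem (sqIdem K x) := by
  rw [IsIdempotentElem]
  nth_rewrite 1 [sqIdem]
  rw [smul_mul_assoc, add_mul, one_mul, sq_mul_sqIdem hx, ← two_smul K,
    inv_smul_smul₀ two_ne_zero]

lemma ySqValue_mul_ySqValue (hx : x ^ 4 = 1) {a b : K} (hab : a * b = 1) :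
    ySqValue x a * ySqValue x b = 1 := by
  have idem := isIdempotentElem_sqIdem (K := K) hx
  have mul_self : x * sqIdem K x * (x * sqIdem K x) = sqIdem K x := by
    rw [(commute_sqIdem x).symm.mul_mul_mul_comm, ← sq x, idem.eq, sq_mul_sqIdem hx]
  have mul_compl : x * sqIdem K x * (1 - sqIdem K x) = 0 := by
    rw [mul_assoc, idem.mul_one_sub_self, mul_zero]
  have compl_mul : (1 - sqIdem K x) * (x * sqIdem K x) = 0 := by
    rw [(commute_sqIdem (K := K) x).eq, ← mul_assoc, idem.one_sub_mul_self, zero_mul]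
  simp only [ySqValue, add_mul, mul_add, smul_mul_assoc, mul_smul_comm, mul_self, mul_compl,
    compl_mul, idem.one_sub.eq, smul_smul, mul_comm b a, hab, one_smul, smul_zero, add_zero,
    zero_add, add_sub_cancel]

end FourthRootOfOne

section SecondAlg

variable {K : Type*} [Field K] {ζ : K}

lemma xS_pow_four : xS K ζ ^ 4 = 1 := by
  simpa [xS] using RingQuot.mkAlgHom_rel K (SecondRel.x_pow_four (K := K) (ζ := ζ))

lemma xS_mul_yS : xS K ζ * yS K ζ = yS K ζ * xS K ζ ^ 3 := by
  simpa [xS, yS] using RingQuot.mkAlgHom_rel K (SecondRel.x_mul_y (K := K) (ζ := ζ))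

lemma yS_mul_yS [NeZero (2 : K)] : yS K ζ * yS K ζ = ySqValue (xS K ζ) ζ := by
  rw [ySqValue_eq, ← sq]
  simpa only [xS, yS, map_pow, map_smul, map_add, map_sub, map_one] using
    RingQuot.mkAlgHom_rel K (SecondRel.y_sq (K := K) (ζ := ζ))

lemma xS_pow_mod_four (n : ℕ) : xS K ζ ^ (n % 4) = xS K ζ ^ n :=
  (pow_eq_pow_mod n xS_pow_four).symm

lemma semiconjBy_yS_xS : SemiconjBy (yS K ζ) (xS K ζ) (xS K ζ ^ 3) := by
  have hyx : SemiconjBy (yS K ζ) (xS K ζ ^ 3) (xS K ζ) := xS_mul_yS.symm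
  have hyx3 := hyx.pow_right 3
  rwa [← pow_mul, ← xS_pow_mod_four, pow_one] at hyx3

lemma yS_mul_xS_pow (n : ℕ) : yS K ζ * xS K ζ ^ n = xS K ζ ^ (3 * n) * yS K ζ := by
  rw [pow_mul]
  exact semiconjBy_yS_xS.pow_right n

lemma xS_pow_mul_yS_mul_self [NeZero (2 : K)] (n : ℕ) :
    xS K ζ ^ n * yS K ζ * (xS K ζ ^ n * yS K ζ) = ySqValue (xS K ζ) ζ := by
  rw [mul_assoc, ← mul_assoc (yS K ζ), yS_mul_xS_pow, mul_assoc, yS_mul_yS, ← mul_assoc, ← pow_add,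
    show n + 3 * n = 4 * n by ring, pow_mul, xS_pow_four, one_pow, one_mul]

lemma adjoin_xS_yS : Algebra.adjoin K {xS K ζ, yS K ζ} = ⊤ := by
  have range_eq : (RingQuot.mkAlgHom K (SecondRel K ζ)).range = ⊤ :=
    AlgHom.range_eq_top _ |>.mpr (RingQuot.mkAlgHom_surjective K _)
  rw [← range_eq, ← Algebra.map_top, ← FreeAlgebra.adjoin_range_ι, AlgHom.map_adjoin]
  congr 1
  ext a
  simp [xS, yS, Fin.exists_fin_two, eq_comm]

lemma span_xS_pow_yS [NeZero (2 : K)] : Submodule.span K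
    (Set.range (xS K ζ ^ · : ℕ → SecondAlg K ζ) ∪ Set.range (xS K ζ ^ · * yS K ζ)) = ⊤ := by
  set P := Submodule.span K
    (Set.range (xS K ζ ^ · : ℕ → SecondAlg K ζ) ∪ Set.range (xS K ζ ^ · * yS K ζ))
  have pow_mem (n : ℕ) : xS K ζ ^ n ∈ P := Submodule.subset_span (.inl ⟨n, rfl⟩)
  have pow_mul_mem (n : ℕ) : xS K ζ ^ n * yS K ζ ∈ P := Submodule.subset_span (.inr ⟨n, rfl⟩)
  refine submodule_eq_top_of_adjoin_eq_top adjoin_xS_yS (by simpa using pow_mem 0) ?_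
  rintro a ha
  change P ≤ P.comap (LinearMap.mulLeft K a)
  rw [Submodule.span_le]
  rcases ha with rfl | rfl <;> rintro _ (⟨n, rfl⟩ | ⟨n, rfl⟩) <;>
    simp only [SetLike.mem_coe, Submodule.mem_comap, LinearMap.mulLeft_apply, ← mul_assoc,
      ← pow_succ', yS_mul_xS_pow]
  · exact pow_mem _
  · exact pow_mul_mem _
  · exact pow_mul_mem _
  · rw [mul_assoc, yS_mul_yS, ySqValue_eq]
    simp only [mul_smul_comm, mul_add, mul_sub, mul_one, ← pow_add, ← pow_succ]
    exact P.smul_mem _ (P.add_mem (P.sub_mem (P.add_mem (P.smul_mem _ (pow_mem _)) (pow_mem _))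
      (P.smul_mem _ (pow_mem _))) (pow_mem _))

lemma w3S_eq_w2S_neg (i : K) : w3S K i ζ = w2S K (-i) ζ := by
  simp only [w2S, w3S, neg_mul, sub_neg_eq_add, ← sub_eq_add_neg]

lemma xS_eq_add [NeZero (2 : K)] {i : K} (hi : (i * ζ ^ 2) ^ 2 = -1) :
    xS K ζ = ((1 - i * ζ ^ 2) / 2) • w2S K i ζ + ((1 + i * ζ ^ 2) / 2) • w3S K i ζ := by
  have two_ne : (2 : K) ≠ 0 := two_ne_zero
  simp only [w2S, w3S]
  match_scalars <;> field_simp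
  · linear_combination 2 * hi
  · linear_combination -2 * hi

lemma xS_pow_three_eq_add [NeZero (2 : K)] {i : K} (hi : (i * ζ ^ 2) ^ 2 = -1) :
    xS K ζ ^ 3 = ((1 + i * ζ ^ 2) / 2) • w2S K i ζ + ((1 - i * ζ ^ 2) / 2) • w3S K i ζ := by
  have two_ne : (2 : K) ≠ 0 := two_ne_zero
  simp only [w2S, w3S]
  match_scalars <;> field_simp
  · linear_combination 2 * hi
  · linear_combination -2 * hi

lemma span_groupLikes_eq_top [NeZero (2 : K)] {i : K} (hi : (i * ζ ^ 2) ^ 2 = -1) :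
    Submodule.span K {w1S K ζ, w2S K i ζ, w3S K i ζ, w4S K ζ, e1S K ζ, e2S K ζ, e3S K ζ,
      e4S K ζ} = ⊤ := by
  set s : Set (SecondAlg K ζ) := {w1S K ζ, w2S K i ζ, w3S K i ζ, w4S K ζ, e1S K ζ, e2S K ζ,
    e3S K ζ, e4S K ζ} with hs
  have mem {a : SecondAlg K ζ} (ha : a ∈ s) : a ∈ Submodule.span K s := Submodule.subset_span ha
  have pow_mem (n : ℕ) (hn : n < 4) : xS K ζ ^ n ∈ Submodule.span K s := by
    interval_cases n
    · simpa [w1S] using mem (a := w1S K ζ) (by simp [hs])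
    · rw [pow_one, xS_eq_add hi]
      exact add_mem (Submodule.smul_mem _ _ (mem (by simp [hs])))
        (Submodule.smul_mem _ _ (mem (by simp [hs])))
    · exact mem (a := w4S K ζ) (by simp [hs])
    · rw [xS_pow_three_eq_add hi]
      exact add_mem (Submodule.smul_mem _ _ (mem (by simp [hs])))
        (Submodule.smul_mem _ _ (mem (by simp [hs])))
  have pow_mul_mem (n : ℕ) (hn : n < 4) : xS K ζ ^ n * yS K ζ ∈ Submodule.span K s := by
    interval_cases n <;> refine mem ?_ <;> simp [hs, e1S, e2S, e3S, e4S]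
  rw [eq_top_iff, ← span_xS_pow_yS, Submodule.span_le]
  rintro _ (⟨n, rfl⟩ | ⟨n, rfl⟩)
  · simpa only [xS_pow_mod_four, SetLike.mem_coe] using pow_mem _ (n.mod_lt four_pos)
  · simpa only [xS_pow_mod_four, SetLike.mem_coe] using pow_mul_mem _ (n.mod_lt four_pos)

lemma w2S_mul_self [NeZero (2 : K)] {i : K} (hi : (i * ζ ^ 2) ^ 2 = -1) :
    w2S K i ζ * w2S K i ζ = 1 := by
  have two_ne : (2 : K) ≠ 0 := two_ne_zero
  have pow_six : xS K ζ ^ 6 = xS K ζ ^ 2 := (xS_pow_mod_four 6).symm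
  simp only [w2S, add_mul, mul_add, smul_mul_smul_comm, ← sq (xS K ζ), ← pow_succ, ← pow_succ',
    ← pow_add, Nat.reduceAdd, xS_pow_four, pow_six]
  match_scalars <;> field_simp
  · linear_combination 2 * hi
  · linear_combination -2 * hi

lemma w4S_mul_self : w4S K ζ * w4S K ζ = 1 := by
  rw [w4S, ← pow_add, xS_pow_four]

section ySqValue

variable [NeZero (2 : K)] (a : K)

lemma ySqValue_mul_e1S : ySqValue (xS K ζ) a * e1S K ζ =
    (2 : K)⁻¹ • (a • e1S K ζ + e2S K ζ - a • e3S K ζ + e4S K ζ) := by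
  simp only [ySqValue_eq, e1S, e2S, e3S, e4S, smul_mul_assoc, add_mul, sub_mul, one_mul]
  module

lemma ySqValue_mul_e2S : ySqValue (xS K ζ) a * e2S K ζ =
    (2 : K)⁻¹ • (e1S K ζ + a • e2S K ζ + e3S K ζ - a • e4S K ζ) := by
  have pow_five : xS K ζ ^ 5 = xS K ζ := (xS_pow_mod_four 5).symm.trans (pow_one _)
  have pow_six : xS K ζ ^ 6 = xS K ζ ^ 2 := (xS_pow_mod_four 6).symm
  simp only [ySqValue_eq, e1S, e2S, e3S, e4S, smul_mul_assoc, add_mul, sub_mul, one_mul,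
    ← mul_assoc, ← pow_succ', ← pow_add, Nat.reduceAdd, xS_pow_four, pow_five, pow_six]
  module

lemma ySqValue_mul_e3S : ySqValue (xS K ζ) a * e3S K ζ =
    (2 : K)⁻¹ • (-(a • e1S K ζ) + e2S K ζ + a • e3S K ζ + e4S K ζ) := by
  have pow_five : xS K ζ ^ 5 = xS K ζ := (xS_pow_mod_four 5).symm.trans (pow_one _)
  simp only [ySqValue_eq, e1S, e2S, e3S, e4S, smul_mul_assoc, add_mul, sub_mul, one_mul,
    ← mul_assoc, ← pow_succ', ← pow_add, Nat.reduceAdd, xS_pow_four, pow_five]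
  module

lemma ySqValue_mul_e4S : ySqValue (xS K ζ) a * e4S K ζ =
    (2 : K)⁻¹ • (e1S K ζ - a • e2S K ζ + e3S K ζ + a • e4S K ζ) := by
  simp only [ySqValue_eq, e1S, e2S, e3S, e4S, smul_mul_assoc, add_mul, sub_mul, one_mul,
    ← mul_assoc, ← sq, ← pow_succ, Nat.reduceAdd, xS_pow_four]
  module

end ySqValue

section Coproduct

variable {ρ : GG →* (SecondAlg K ζ →ₐ[K] SecondAlg K ζ)}
  {Δ : SecondAlg K ζ →ₗ[K] SecondAlg K ζ ⊗[K] SecondAlg K ζ}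

lemma isTwistedGroupLike_xS [NeZero (2 : K)] (hρ2x : ρ g2 (xS K ζ) = xS K ζ ^ 3)
    (hρ3x : ρ g3 (xS K ζ) = xS K ζ)
    (hΔx : Δ (xS K ζ) = (2 : K)⁻¹ •
      ((xS K ζ) ⊗ₜ[K] (xS K ζ) + (xS K ζ) ⊗ₜ[K] (xS K ζ ^ 3) +
        (xS K ζ ^ 3) ⊗ₜ[K] (xS K ζ) - (xS K ζ ^ 3) ⊗ₜ[K] (xS K ζ ^ 3))) :
    IsTwistedGroupLike ρ Δ (sqIdem K (xS K ζ)) (xS K ζ) where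
  fixed := hρ3x
  commute := commute_sqIdem _
  comul_eq := by
    rw [one_sub_sqIdem]
    simp only [hΔx, hρ2x, sqIdem, mul_sub, mul_smul_comm, mul_add, mul_one, ← pow_succ',
      Nat.reduceAdd, sub_tmul, add_tmul, ← smul_tmul']
    module

lemma comul_w2S [NeZero (2 : K)] {i : K} (hi : (i * ζ ^ 2) ^ 2 = -1)
    (hρ2x : ρ g2 (xS K ζ) = xS K ζ ^ 3)
    (hpow : ∀ n, IsTwistedGroupLike ρ Δ (sqIdem K (xS K ζ)) (xS K ζ ^ n)) :
    Δ (w2S K i ζ) = w2S K i ζ ⊗ₜ w2S K i ζ := by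
  have two_ne : (2 : K) ≠ 0 := two_ne_zero
  have pow_five : xS K ζ ^ 5 = xS K ζ ^ 1 := (xS_pow_mod_four 5).symm
  have pow_nine : xS K ζ ^ 9 = xS K ζ ^ 1 := (xS_pow_mod_four 9).symm
  rw [w2S, ← pow_one (xS K ζ), ← pow_mul, map_add, map_smul, map_smul, (hpow 1).comul_eq,
    (hpow _).comul_eq, one_sub_sqIdem]
  simp only [map_pow, hρ2x, sqIdem, ← pow_mul, mul_sub, mul_smul_comm, mul_add, mul_one, ← pow_add,
    Nat.reduceAdd, Nat.reduceMul, pow_five, pow_nine, sub_tmul, add_tmul, tmul_add, ← smul_tmul',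
    tmul_smul, smul_add, smul_sub]
  match_scalars <;> field_simp
  · linear_combination -hi
  · linear_combination hi
  · linear_combination hi
  · linear_combination -hi

lemma comul_w4S (hρ2x : ρ g2 (xS K ζ) = xS K ζ ^ 3)
    (hpow : ∀ n, IsTwistedGroupLike ρ Δ (sqIdem K (xS K ζ)) (xS K ζ ^ n)) :
    Δ (w4S K ζ) = w4S K ζ ⊗ₜ w4S K ζ := by
  have map_eq : ρ g2 (xS K ζ ^ 2) = xS K ζ ^ 2 := by
    rw [map_pow, hρ2x, ← pow_mul, ← xS_pow_mod_four]
  rw [w4S, (hpow 2).comul_eq, map_eq, ← add_tmul, ← mul_add, add_sub_cancel, mul_one]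

end Coproduct

section Antipode

variable [NeZero (2 : K)] {Δ : SecondAlg K ζ →ₗ[K] SecondAlg K ζ ⊗[K] SecondAlg K ζ}
  {ε : SecondAlg K ζ →ₐ[K] K} {S : SecondAlg K ζ →ₗ[K] SecondAlg K ζ}

lemma counit_w2S (i : K) (hεx : ε (xS K ζ) = 1) : ε (w2S K i ζ) = 1 := by
  have two_ne : (2 : K) ≠ 0 := two_ne_zero
  simp only [w2S, map_add, map_smul, map_pow, hεx, one_pow, smul_eq_mul, mul_one]
  field_simp
  ring

lemma invertsGroupLike_w2S {ρ : GG →* (SecondAlg K ζ →ₐ[K] SecondAlg K ζ)} {i : K}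
    (hi : (i * ζ ^ 2) ^ 2 = -1) (hρ2x : ρ g2 (xS K ζ) = xS K ζ ^ 3)
    (hpow : ∀ n, IsTwistedGroupLike ρ Δ (sqIdem K (xS K ζ)) (xS K ζ ^ n))
    (hεx : ε (xS K ζ) = 1) (hS : S (w2S K i ζ) = w2S K i ζ) :
    InvertsGroupLike Δ ε.toLinearMap S (w2S K i ζ) :=
  invertsGroupLike_of_mul_self_eq_one (comul_w2S hi hρ2x hpow) (counit_w2S i hεx) hS
    (w2S_mul_self hi)

lemma invertsGroupLike_xS_pow_mul_yS {n : ℕ} {η : SecondAlg K ζ} (hη : xS K ζ ^ n * yS K ζ = η)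
    (hζ : ζ ≠ 0) (hΔ : Δ (xS K ζ ^ n * yS K ζ) = (xS K ζ ^ n * yS K ζ) ⊗ₜ (xS K ζ ^ n * yS K ζ))
    (hεx : ε (xS K ζ) = 1) (hεy : ε (yS K ζ) = 1)
    (hS : S η = ySqValue (xS K ζ) ζ⁻¹ * η) : InvertsGroupLike Δ ε.toLinearMap S η := by
  have mul_self : η * η = ySqValue (xS K ζ) ζ := hη ▸ xS_pow_mul_yS_mul_self n
  have left_inv : ySqValue (xS K ζ) ζ⁻¹ * η * η = 1 := by
    rw [mul_assoc, mul_self, ySqValue_mul_ySqValue xS_pow_four (inv_mul_cancel₀ hζ)]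
  have right_inv : η * (η * ySqValue (xS K ζ) ζ⁻¹) = 1 := by
    rw [← mul_assoc, mul_self, ySqValue_mul_ySqValue xS_pow_four (mul_inv_cancel₀ hζ)]
  exact {
    comul_eq := hη ▸ hΔ
    counit_eq := by simp [← hη, hεx, hεy]
    antipode_mul_self := by rw [hS, left_inv]
    self_mul_antipode := by rw [hS, left_inv_eq_right_inv left_inv right_inv, right_inv] }

end Antipode

end SecondAlg

theorem stmt_16 {K : Type*} [Field K] (ι : K) (hι : IsPrimitiveRoot ι 4)
    (ζ : K) (hζ : ζ ^ 4 = 1)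
    (ρ : GG →* (SecondAlg K ζ →ₐ[K] SecondAlg K ζ))
    (hρ2x : ρ g2 (xS K ζ) = xS K ζ ^ 3) (hρ2y : ρ g2 (yS K ζ) = xS K ζ ^ 3 * yS K ζ)
    (hρ3x : ρ g3 (xS K ζ) = xS K ζ) (hρ3y : ρ g3 (yS K ζ) = xS K ζ ^ 2 * yS K ζ)
    (θ : GG → GG → K)
    (hθr : ∀ g h h' : GG, θ g (h * h') = θ g h * θ g h')
    (hθl : ∀ g g' h : GG, θ (g * g') h = θ g h * θ g' h)
    (hθ22 : θ g2 g2 = ζ ^ 2) (hθ23 : θ g2 g3 = -1)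
    (hθ32 : θ g3 g2 = -1) (hθ33 : θ g3 g3 = 1)
    -- the coproduct `Δ : A → A ⊗̂ A`
    (Δ : SecondAlg K ζ →ₗ[K] SecondAlg K ζ ⊗[K] SecondAlg K ζ)
    (hΔ1 : Δ 1 = (1 : SecondAlg K ζ) ⊗ₜ[K] (1 : SecondAlg K ζ))
    (hΔm : ∀ a b : SecondAlg K ζ, Δ (a * b) = twMul ρ θ (Δ a) (Δ b))
    (hΔx : Δ (xS K ζ) = (2 : K)⁻¹ •
      ((xS K ζ) ⊗ₜ[K] (xS K ζ) + (xS K ζ) ⊗ₜ[K] (xS K ζ ^ 3) +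
        (xS K ζ ^ 3) ⊗ₜ[K] (xS K ζ) - (xS K ζ ^ 3) ⊗ₜ[K] (xS K ζ ^ 3)))
    (hΔy : Δ (yS K ζ) = (yS K ζ) ⊗ₜ[K] (yS K ζ))
    -- the counit `ε : A → K` with `ε(x) = ε(y) = 1`
    (ε : SecondAlg K ζ →ₐ[K] K)
    (hεx : ε (xS K ζ) = 1) (hεy : ε (yS K ζ) = 1)
    -- the antipode `S`, given on the basis of group-like elements
    (S : SecondAlg K ζ →ₗ[K] SecondAlg K ζ)
    (hSw1 : S (w1S K ζ) = w1S K ζ) (hSw2 : S (w2S K ι ζ) = w2S K ι ζ)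
    (hSw3 : S (w3S K ι ζ) = w3S K ι ζ) (hSw4 : S (w4S K ζ) = w4S K ζ)
    (hSe1 : S (e1S K ζ) = (2 : K)⁻¹ •
      (ζ⁻¹ • e1S K ζ + e2S K ζ - ζ⁻¹ • e3S K ζ + e4S K ζ))
    (hSe2 : S (e2S K ζ) = (2 : K)⁻¹ •
      (e1S K ζ + ζ⁻¹ • e2S K ζ + e3S K ζ - ζ⁻¹ • e4S K ζ))
    (hSe3 : S (e3S K ζ) = (2 : K)⁻¹ •
      (-(ζ⁻¹ • e1S K ζ) + e2S K ζ + ζ⁻¹ • e3S K ζ + e4S K ζ))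
    (hSe4 : S (e4S K ζ) = (2 : K)⁻¹ •
      (e1S K ζ - ζ⁻¹ • e2S K ζ + e3S K ζ + ζ⁻¹ • e4S K ζ)) :
    -- `S` is an antipode: `∑ S(a₁)a₂ = ε(a)1 = ∑ a₁S(a₂)`
    ∀ a : SecondAlg K ζ,
      (LinearMap.mul' K (SecondAlg K ζ))
          ((TensorProduct.map S LinearMap.id) (Δ a)) = ε a • (1 : SecondAlg K ζ) ∧
      (LinearMap.mul' K (SecondAlg K ζ))
          ((TensorProduct.map LinearMap.id S) (Δ a)) = ε a • (1 : SecondAlg K ζ) := by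
  have four_ne : (4 : K) ≠ 0 := by simpa using hι.neZero'.out
  have : NeZero (2 : K) := ⟨fun h ↦ four_ne (by linear_combination 2 * h)⟩
  have hζ0 : ζ ≠ 0 := by rintro rfl; simp at hζ
  have hι2 : ι ^ 2 = -1 := (hι.pow (by norm_num) (by norm_num : 4 = 2 * 2)).eq_neg_one_of_two_right
  have hc : (ι * ζ ^ 2) ^ 2 = -1 := by linear_combination ι ^ 2 * hζ + hι2
  have hθ : IsSignBicharacter θ := ⟨hθr, hθl, hθ23, hθ32, hθ33⟩
  have idem := isIdempotentElem_sqIdem (K := K) (xS_pow_four (ζ := ζ))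
  have hρe : ρ g3 (sqIdem K (xS K ζ)) = sqIdem K (xS K ζ) := by simp [sqIdem, hρ3x]
  have hpow := (isTwistedGroupLike_xS hρ2x hρ3x hΔx).pow hθ hΔm idem hρe hΔ1
  have hρy : ρ g3 (yS K ζ) = sqIdem K (xS K ζ) * yS K ζ - (1 - sqIdem K (xS K ζ)) * yS K ζ := by
    rw [hρ3y, ← sub_mul, sqIdem_sub_one_sub_sqIdem]
  have inverts_η {n η} (hη : xS K ζ ^ n * yS K ζ = η) :=
    invertsGroupLike_xS_pow_mul_yS (S := S) hη hζ0
      ((hpow n).comul_mul hθ hΔm idem hρy hΔy) hεx hεy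
  rw [w3S_eq_w2S_neg] at hSw3
  refine antipode_of_span_groupLike (ε := ε.toLinearMap) (span_groupLikes_eq_top hc) ?_
  rintro _ (rfl | rfl | rfl | rfl | rfl | rfl | rfl | rfl)
  · exact invertsGroupLike_of_mul_self_eq_one hΔ1 (map_one ε) hSw1 (one_mul 1)
  · exact invertsGroupLike_w2S hc hρ2x hpow hεx hSw2
  · exact w3S_eq_w2S_neg ι ▸ invertsGroupLike_w2S (by linear_combination hc) hρ2x hpow hεx hSw3
  · exact invertsGroupLike_of_mul_self_eq_one (comul_w4S hρ2x hpow) (by simp [w4S, hεx]) hSw4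
      w4S_mul_self
  · exact inverts_η (n := 0) (by simp [e1S]) (hSe1.trans (ySqValue_mul_e1S _).symm)
  · exact inverts_η (n := 3) rfl (hSe2.trans (ySqValue_mul_e2S _).symm)
  · exact inverts_η (n := 2) rfl (hSe3.trans (ySqValue_mul_e3S _).symm)
  · exact inverts_η (n := 1) (by simp [e4S]) (hSe4.trans (ySqValue_mul_e4S _).symm)
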